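/- Let X be a locally compact metric space and suppose for every x ∈ X there is ε₀ > 0 such that for all ε < ε₀ the sphere ∂B(x,ε) is compact; if every pair of distinct points of X is separated by a closed set of ind ≤ D−1 (with separators coming from a family closed under intersecting with X), then ind(X) ≤ D via a finite-subcover argument: finitely many separators L₁,…,L_m suffice to separate x from the compact sphere ∂B(x,ε), and the resulting open set U ∋ x contained in B(x,ε) has frontier contained in L₁ ∪ … ∪ L_m, hence ind(∂U) ≤ D−1. -/

import Mathlib

universe u

/-- `IndLt n X` means the small inductive dimension of `X` is at most `n - 1`. -/
def IndLt : ℕ → (X : Type u) → [TopologicalSpace X] → Prop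
  | 0, X, _ => IsEmpty X
  | (n+1), X, _ => ∀ (p : X) (V : Set X), IsOpen V → p ∈ V →
      ∃ U : Set X, IsOpen U ∧ p ∈ U ∧ U ⊆ V ∧ IndLt n ↥(frontier U)

/-- `L` separates `x` from `y`: `L` is closed and the complement of `L` is a disjoint
union of open sets `W ∋ x` and `V ∋ y`. -/
def SeparatesPoints {X : Type u} [TopologicalSpace X] (L : Set X) (x y : X) : Prop :=
  IsClosed L ∧ ∃ W V : Set X, IsOpen W ∧ IsOpen V ∧ x ∈ W ∧ y ∈ V ∧
    W ∩ V = ∅ ∧ W ∪ V = Lᶜ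

open Filter Set Topology TopologicalSpace

/-!
If `p` lies in an open set `G` with compact frontier, then finitely many of the given separators
already separate `p` from `frontier G`, and they cut out an open `U` with `p ∈ U ⊆ G` whose frontier
is contained in their union. It remains to see that a finite union of closed sets of dimension
`< n` has dimension `< n`.

This is the countable closed sum theorem. In a second countable space of dimension `< n + 1`, the
frontiers of a countable basis are closed sets of dimension `< n`, and removing them leaves a space
of dimension `< 1`. Collecting these frontiers over a countable closed cover gives a set `Y` of
dimension `< n` by induction, while `Yᶜ` has dimension `< 1` by the zero-dimensional sum theorem.
Closed sets can be separated by an open set whose frontier misses `Yᶜ`, hence lies in `Y`, so the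
whole space has dimension `< n + 1`.
-/

theorem indLt_iff_hasSmallInductiveDimensionLT {n : ℕ} {X : Type u} [TopologicalSpace X] :
    IndLt n X ↔ HasSmallInductiveDimensionLT X n := by
  induction n generalizing X with
  | zero => exact hasSmallInductiveDimensionLT_zero_iff.symm
  | succ n ih =>
    constructor
    · intro h
      refine .succ n {U | IsOpen U ∧ IndLt n (frontier U)}
        (isTopologicalBasis_of_isOpen_of_nhds (fun U hU => hU.1) fun p V hpV hV => ?_)
        fun U hU => ih.1 hU.2
      obtain ⟨U, hU, hpU, hUV, hfr⟩ := h p V hV hpV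
      exact ⟨U, ⟨hU, hfr⟩, hpU, hUV⟩
    · intro (.succ _ s hs hfr) p V hV hpV
      obtain ⟨U, hU, hpU, hUV⟩ := hs.exists_subset_of_mem_open hpV hV
      exact ⟨U, hs.isOpen hU, hpU, hUV, ih.2 (hfr U hU)⟩

theorem hasSmallInductiveDimensionLT_of_isInducing {X Y : Type*} [TopologicalSpace X]
    [TopologicalSpace Y] {n : ℕ} {f : Y → X} (hf : IsInducing f)
    (hX : HasSmallInductiveDimensionLT X n) : HasSmallInductiveDimensionLT Y n := by
  induction n generalizing X Y with
  | zero =>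
    rw [hasSmallInductiveDimensionLT_zero_iff] at hX ⊢
    exact Function.isEmpty f
  | succ n ih =>
    let .succ _ s hs hfr := hX
    refine .succ n _ (hs.isInducing hf) ?_
    rintro _ ⟨U, hU, rfl⟩
    exact ih ((hf.comp .subtypeVal).codRestrict
      fun y => hf.continuous.frontier_preimage_subset U y.2) (hfr U hU)

section Separation

variable {X : Type*} [TopologicalSpace X]

theorem exists_isOpen_disjoint_closure [NormalSpace X] {E F : Set X} (hE : IsClosed E)
    (hF : IsClosed F) (hEF : Disjoint E F) :
    ∃ U V : Set X, IsOpen U ∧ IsOpen V ∧ E ⊆ U ∧ F ⊆ V ∧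
      Disjoint (closure U) (closure V) := by
  obtain ⟨U, hU, hEU, hUF⟩ := normal_exists_closure_subset hE hF.isOpen_compl
    hEF.subset_compl_right
  obtain ⟨V, hV, hFV, hVU⟩ := normal_exists_closure_subset hF isClosed_closure.isOpen_compl
    (subset_compl_comm.1 hUF)
  exact ⟨U, V, hU, hV, hEU, hFV, (disjoint_left.2 fun _ hx => hVU hx).symm⟩

theorem separatedNhds_image_of_isInducing [CompletelyNormalSpace X] {Y : Type*}
    [TopologicalSpace Y] {f : Y → X} (hf : IsInducing f) {U V : Set Y} (hU : IsOpen U)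
    (hV : IsOpen V) (hUV : Disjoint U V) : SeparatedNhds (f '' U) (f '' V) := by
  have disjoint_closure_image {A B : Set Y} (hB : IsOpen B) (hAB : Disjoint A B) :
      Disjoint (closure (f '' A)) (f '' B) := by
    rw [disjoint_comm, disjoint_image_left, ← hf.closure_eq_preimage_closure_image]
    exact (hAB.closure_left hB).symm
  exact separatedNhds_iff_disjoint.2 (CompletelyNormalSpace.completely_normal
    (disjoint_closure_image hV hUV) (disjoint_closure_image hU hUV.symm).symm)

end Separation

section ZeroDimensional

variable {X : Type*} [TopologicalSpace X]

theorem exists_isClopen_of_disjoint_isClosed [LindelofSpace X]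
    (hX : HasSmallInductiveDimensionLT X 1) {E F : Set X} (hE : IsClosed E) (hF : IsClosed F)
    (hEF : Disjoint E F) : ∃ K : Set X, IsClopen K ∧ E ⊆ K ∧ Disjoint K F := by
  classical
  have hbasis := hasSmallInductiveDimensionLT_one_iff.1 hX
  let 𝒰 := {U : Set X // IsClopen U ∧ (Disjoint U E ∨ Disjoint U F)}
  have exists_mem_disjoint {G : Set X} (hG : IsClosed G) {x : X} (hx : x ∉ G) :
      ∃ U, IsClopen U ∧ x ∈ U ∧ Disjoint U G := by
    obtain ⟨U, hU, hxU, hUG⟩ := hbasis.exists_subset_of_mem_open hx hG.isOpen_compl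
    exact ⟨U, hU, hxU, disjoint_left.2 hUG⟩
  have hcover : univ ⊆ ⋃ U : 𝒰, U.1 := by
    intro x _
    by_cases hxE : x ∈ E
    · obtain ⟨U, hU, hxU, hUF⟩ := exists_mem_disjoint hF (hEF.notMem_of_mem_left hxE)
      exact mem_iUnion.2 ⟨⟨U, hU, .inr hUF⟩, hxU⟩
    · obtain ⟨U, hU, hxU, hUE⟩ := exists_mem_disjoint hE hxE
      exact mem_iUnion.2 ⟨⟨U, hU, .inl hUE⟩, hxU⟩
  have : Nonempty 𝒰 := ⟨⟨∅, isClopen_empty, .inl (empty_disjoint E)⟩⟩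
  obtain ⟨U, hU⟩ := isLindelof_univ.indexed_countable_subcover (fun U : 𝒰 => U.1)
    (fun U => U.2.1.isOpen) hcover
  have hmem (x : X) : ∃ k, x ∈ (U k).1 := mem_iUnion.1 (hU (mem_univ x))
  -- Each `U k` misses `E` or `F`; the first one containing `x` decides whether `x` goes into `K`.
  let firstIndex (x : X) : ℕ := Nat.find (hmem x)
  have hcont : Continuous firstIndex := continuous_discrete_rng.2 fun k => by
    rw [preimage_find_eq_disjointed (fun k => (U k).1) hmem]
    exact (disjointedRec (f := fun k => (U k).1) (p := IsClopen)
      (fun _ j hA => hA.diff (U j).2.1) (U k).2.1).isOpen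
  refine ⟨firstIndex ⁻¹' {k | Disjoint (U k).1 F}, (isClopen_discrete _).preimage hcont,
    fun x hxE => ?_, disjoint_left.2 fun x hx => hx.notMem_of_mem_left (Nat.find_spec (hmem x))⟩
  exact (U (firstIndex x)).2.2.resolve_left
    (not_disjoint_iff.2 ⟨x, Nat.find_spec (hmem x), hxE⟩)

theorem exists_isOpen_disjoint_closure_cover [NormalSpace X] [LindelofSpace X] {C : Set X}
    (hC : IsClosed C) (hdim : HasSmallInductiveDimensionLT C 1) {E F : Set X}
    (hE : IsClosed E) (hF : IsClosed F) (hEF : Disjoint E F) :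
    ∃ U V : Set X, IsOpen U ∧ IsOpen V ∧ E ⊆ U ∧ F ⊆ V ∧ C ⊆ U ∪ V ∧
      Disjoint (closure U) (closure V) := by
  have : LindelofSpace C := isLindelof_iff_lindelofSpace.1 hC.isLindelof
  have hmap : IsClosedMap ((↑) : C → X) := hC.isClosedEmbedding_subtypeVal.isClosedMap
  obtain ⟨K, hK, hEK, hKF⟩ := exists_isClopen_of_disjoint_isClosed hdim
    (hE.preimage continuous_subtype_val) (hF.preimage continuous_subtype_val)
    (hEF.preimage _)
  have hdisj : Disjoint (E ∪ (↑) '' K) (F ∪ (↑) '' Kᶜ) := by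
    rw [disjoint_union_left, disjoint_union_right, disjoint_union_right]
    refine ⟨⟨hEF, ?_⟩, ?_, (disjoint_image_iff Subtype.val_injective).2 disjoint_compl_right⟩
    · exact disjoint_image_right.2 (disjoint_compl_right.mono_left hEK)
    · exact disjoint_image_left.2 hKF
  obtain ⟨U, V, hU, hV, hEU, hFV, hUV⟩ := exists_isOpen_disjoint_closure
    (hE.union (hmap K hK.isClosed)) (hF.union (hmap Kᶜ hK.compl.isClosed)) hdisj
  refine ⟨U, V, hU, hV, subset_union_left.trans hEU, subset_union_left.trans hFV, ?_, hUV⟩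
  intro x hx
  by_cases hxK : (⟨x, hx⟩ : C) ∈ K
  · exact .inl (hEU (.inr (mem_image_of_mem _ hxK)))
  · exact .inr (hFV (.inr ⟨_, hxK, rfl⟩))

-- Fatten `E` and `F` successively so that the `k`-th step swallows `C k` while the closures
-- stay disjoint; the unions of the two increasing sequences partition `X`.
theorem exists_isClopen_of_iUnion_isClosed [NormalSpace X] [LindelofSpace X] {C : ℕ → Set X}
    (hC : ∀ k, IsClosed (C k)) (hcover : ⋃ k, C k = univ)
    (hdim : ∀ k, HasSmallInductiveDimensionLT (C k) 1) {E F : Set X}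
    (hE : IsClosed E) (hF : IsClosed F) (hEF : Disjoint E F) :
    ∃ K : Set X, IsClopen K ∧ E ⊆ K ∧ Disjoint K F := by
  let Pair := {P : Set X × Set X // IsOpen P.1 ∧ IsOpen P.2 ∧ Disjoint (closure P.1) (closure P.2)}
  have exists_fattening (k : ℕ) (P : Pair) : ∃ Q : Pair,
      P.1.1 ⊆ Q.1.1 ∧ P.1.2 ⊆ Q.1.2 ∧ C k ⊆ Q.1.1 ∪ Q.1.2 := by
    obtain ⟨U, V, hU, hV, hPU, hPV, hCUV, hUV⟩ := exists_isOpen_disjoint_closure_cover (hC k)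
      (hdim k) isClosed_closure isClosed_closure P.2.2.2
    exact ⟨⟨(U, V), hU, hV, hUV⟩, subset_closure.trans hPU, subset_closure.trans hPV, hCUV⟩
  choose fatten hfst hsnd hfatten using exists_fattening
  obtain ⟨U₀, V₀, hU₀, hV₀, hEU₀, hFV₀, hUV₀⟩ := exists_isOpen_disjoint_closure hE hF hEF
  let P (k : ℕ) : Pair := Nat.rec ⟨(U₀, V₀), hU₀, hV₀, hUV₀⟩ fatten k
  have hmonoU : Monotone fun k => (P k).1.1 := monotone_nat_of_le_succ fun k => hfst k (P k)
  have hmonoV : Monotone fun k => (P k).1.2 := monotone_nat_of_le_succ fun k => hsnd k (P k)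
  have hdisj : Disjoint (⋃ k, (P k).1.1) (⋃ k, (P k).1.2) := by
    simp only [disjoint_iUnion_left, disjoint_iUnion_right]
    intro j i
    exact (P (max i j)).2.2.2.mono ((hmonoU (le_max_left i j)).trans subset_closure)
      ((hmonoV (le_max_right i j)).trans subset_closure)
  have hunion : univ ⊆ (⋃ k, (P k).1.1) ∪ ⋃ k, (P k).1.2 := by
    rw [← hcover, ← iUnion_union_distrib]
    exact iUnion_subset fun k => (hfatten k (P k)).trans
      (subset_iUnion (fun k => (P k).1.1 ∪ (P k).1.2) (k + 1))
  refine ⟨⋃ k, (P k).1.1, isClopen_of_disjoint_cover_open hunion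
    (isOpen_iUnion fun k => (P k).2.1) (isOpen_iUnion fun k => (P k).2.2.1) hdisj,
    hEU₀.trans (subset_iUnion (fun k => (P k).1.1) 0),
    hdisj.mono_right (hFV₀.trans (subset_iUnion (fun k => (P k).1.2) 0))⟩

theorem hasSmallInductiveDimensionLT_one_of_iUnion_isClosed [RegularSpace X] [LindelofSpace X]
    {ι : Type*} [Countable ι] {C : ι → Set X} (hC : ∀ i, IsClosed (C i))
    (hcover : ⋃ i, C i = univ) (hdim : ∀ i, HasSmallInductiveDimensionLT (C i) 1) :
    HasSmallInductiveDimensionLT X 1 := by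
  rcases isEmpty_or_nonempty ι with _ | _
  · have : IsEmpty X := by rwa [iUnion_of_empty, eq_comm, univ_eq_empty_iff] at hcover
    infer_instance
  obtain ⟨e, he⟩ := exists_surjective_nat ι
  refine hasSmallInductiveDimensionLT_one_iff.2
    (isTopologicalBasis_of_isOpen_of_nhds (fun K hK => hK.isOpen) fun p V hpV hV => ?_)
  obtain ⟨N, hN, hNclosed, hNV⟩ := exists_mem_nhds_isClosed_subset (hV.mem_nhds hpV)
  obtain ⟨K, hK, hNK, hKV⟩ := exists_isClopen_of_iUnion_isClosed (fun k => hC (e k))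
    (by rw [he.iUnion_comp, hcover]) (fun k => hdim (e k)) hNclosed hV.isClosed_compl
    (disjoint_compl_right.mono_left hNV)
  exact ⟨K, hK, hNK (mem_of_mem_nhds hN), disjoint_compl_right_iff_subset.1 hKV⟩

theorem exists_isOpen_disjoint_cover [CompletelyNormalSpace X] {Z : Set X} [LindelofSpace Z]
    (hdim : HasSmallInductiveDimensionLT Z 1) {E F : Set X} (hE : IsClosed E)
    (hF : IsClosed F) (hEF : Disjoint E F) :
    ∃ U V : Set X, IsOpen U ∧ IsOpen V ∧ Disjoint U V ∧ E ⊆ U ∧ F ⊆ V ∧ Z ⊆ U ∪ V := by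
  obtain ⟨O, P, hO, hP, hEO, hFP, hOP⟩ := exists_isOpen_disjoint_closure hE hF hEF
  obtain ⟨K, hK, hOK, hKP⟩ := exists_isClopen_of_disjoint_isClosed hdim
    (isClosed_closure.preimage continuous_subtype_val)
    (isClosed_closure.preimage continuous_subtype_val) (hOP.preimage ((↑) : Z → X))
  obtain ⟨A, B, hA, hB, hKA, hKB, hAB⟩ := separatedNhds_image_of_isInducing .subtypeVal
    hK.isOpen hK.compl.isOpen disjoint_compl_right
  refine ⟨O ∪ A \ closure P, P ∪ B \ closure O, hO.union (hA.sdiff isClosed_closure),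
    hP.union (hB.sdiff isClosed_closure), ?_, hEO.trans subset_union_left,
    hFP.trans subset_union_left, fun z hz => ?_⟩
  · have hOcl : O ⊆ closure O := subset_closure
    have hPcl : P ⊆ closure P := subset_closure
    rw [disjoint_left] at hOP hAB ⊢
    grind
  · by_cases hzK : (⟨z, hz⟩ : Z) ∈ K
    · exact .inl (.inr ⟨hKA (mem_image_of_mem _ hzK), hKP.notMem_of_mem_left hzK⟩)
    · exact .inr (.inr ⟨hKB ⟨_, hzK, rfl⟩, fun hzO => hzK (hOK hzO)⟩)

end ZeroDimensional

section SumTheorem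

variable {X : Type*} [TopologicalSpace X] {n : ℕ}

theorem hasSmallInductiveDimensionLT_succ_of_union_eq_univ [RegularSpace X]
    [CompletelyNormalSpace X] {Y Z : Set X} [LindelofSpace Z] (hYZ : Y ∪ Z = univ)
    (hY : HasSmallInductiveDimensionLT Y n) (hZ : HasSmallInductiveDimensionLT Z 1) :
    HasSmallInductiveDimensionLT X (n + 1) := by
  refine .succ n {U | IsOpen U ∧ frontier U ⊆ Y}
    (isTopologicalBasis_of_isOpen_of_nhds (fun U hU => hU.1) fun p V hpV hV => ?_)
    fun U hU => hasSmallInductiveDimensionLT_of_isInducing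
      (IsEmbedding.inclusion hU.2).isInducing hY
  obtain ⟨N, hN, hNclosed, hNV⟩ := exists_mem_nhds_isClosed_subset (hV.mem_nhds hpV)
  obtain ⟨U, W, hU, hW, hUW, hNU, hVW, hZUW⟩ := exists_isOpen_disjoint_cover hZ hNclosed
    hV.isClosed_compl (disjoint_compl_right.mono_left hNV)
  refine ⟨U, ⟨hU, fun x hx => ?_⟩, hNU (mem_of_mem_nhds hN), fun x hxU => ?_⟩
  · rw [hU.frontier_eq] at hx
    have hxZ : x ∉ Z := fun hxZ => (hZUW hxZ).elim hx.2
      ((hUW.closure_left hW).notMem_of_mem_left hx.1)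
    exact (hYZ.ge (mem_univ x)).resolve_right hxZ
  · by_contra hxV
    exact hUW.notMem_of_mem_left hxU (hVW hxV)

theorem exists_seq_isClosed_of_hasSmallInductiveDimensionLT_succ [SecondCountableTopology X]
    (hX : HasSmallInductiveDimensionLT X (n + 1)) :
    ∃ F : ℕ → Set X, (∀ k, IsClosed (F k)) ∧ (∀ k, HasSmallInductiveDimensionLT (F k) n) ∧
      HasSmallInductiveDimensionLT ↥(⋃ k, F k)ᶜ 1 := by
  let .succ _ s hs hfr := hX
  obtain ⟨t, hts, htc, ht⟩ := hs.exists_countable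
  obtain ⟨U, hU⟩ := (htc.insert ∅).exists_eq_range (insert_nonempty ∅ t)
  refine ⟨fun k => frontier (U k), fun k => isClosed_frontier, fun k => ?_,
    .succ 0 _ (ht.isInducing .subtypeVal) ?_⟩
  · rcases hU.ge (mem_range_self k) with hk | hk
    · have : IsEmpty (frontier (U k)) := isEmpty_coe_sort.2 (by rw [hk, frontier_empty])
      infer_instance
    · exact hfr _ (hts hk)
  · rintro _ ⟨V, hV, rfl⟩
    obtain ⟨k, rfl⟩ := hU.le (mem_insert_of_mem ∅ hV)
    rw [hasSmallInductiveDimensionLT_zero_iff]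
    exact ⟨fun x => x.1.2 (mem_iUnion.2
      ⟨k, continuous_subtype_val.frontier_preimage_subset _ x.2⟩)⟩

theorem hasSmallInductiveDimensionLT_of_iUnion_isClosed [RegularSpace X]
    [SecondCountableTopology X] {ι : Type*} [Countable ι] {C : ι → Set X}
    (hC : ∀ i, IsClosed (C i)) (hcover : ⋃ i, C i = univ)
    (hdim : ∀ i, HasSmallInductiveDimensionLT (C i) n) : HasSmallInductiveDimensionLT X n := by
  induction n generalizing X ι with
  | zero =>
    simp only [hasSmallInductiveDimensionLT_zero_iff, isEmpty_coe_sort] at hdim ⊢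
    rw [← univ_eq_empty_iff, ← hcover]
    simp only [hdim, iUnion_empty]
  | succ n ih =>
    choose F hF hFdim hFcompl using
      fun i => exists_seq_isClosed_of_hasSmallInductiveDimensionLT_succ (hdim i)
    let G (p : ι × ℕ) : Set X := (↑) '' F p.1 p.2
    let Y : Set X := ⋃ p, G p
    have hGdim (p : ι × ℕ) : HasSmallInductiveDimensionLT (G p) n :=
      hasSmallInductiveDimensionLT_of_isInducing
        (IsEmbedding.subtypeVal.homeomorphImage (F p.1 p.2)).symm.isInducing (hFdim p.1 p.2)
    have hY : HasSmallInductiveDimensionLT Y n := by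
      refine ih (C := fun p => ((↑) : Y → X) ⁻¹' G p)
        (fun p => ((hC p.1).isClosedEmbedding_subtypeVal.isClosedMap _
          (hF p.1 p.2)).preimage continuous_subtype_val) ?_
        fun p => hasSmallInductiveDimensionLT_of_isInducing
          ((IsInducing.subtypeVal.comp .subtypeVal).codRestrict fun y => y.2) (hGdim p)
      rw [← preimage_iUnion, Subtype.coe_preimage_self]
    have hYcompl : HasSmallInductiveDimensionLT ↥Yᶜ 1 := by
      refine hasSmallInductiveDimensionLT_one_of_iUnion_isClosed
        (C := fun i => ((↑) : ↥Yᶜ → X) ⁻¹' C i)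
        (fun i => (hC i).preimage continuous_subtype_val)
        (by rw [← preimage_iUnion, hcover, preimage_univ])
        fun i => hasSmallInductiveDimensionLT_of_isInducing
          (((IsInducing.subtypeVal.comp .subtypeVal).codRestrict fun z => z.2).codRestrict
            fun z hz => ?_) (hFcompl i)
      obtain ⟨k, hk⟩ := mem_iUnion.1 hz
      exact z.1.2 (mem_iUnion.2 ⟨(i, k), mem_image_of_mem _ hk⟩)
    exact hasSmallInductiveDimensionLT_succ_of_union_eq_univ (union_compl_self Y) hY hYcompl

theorem hasSmallInductiveDimensionLT_of_subset_sUnion {A : Set X} [RegularSpace A]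
    [SecondCountableTopology A] {𝓕 : Set (Set X)} (h𝓕 : 𝓕.Countable)
    (hclosed : ∀ F ∈ 𝓕, IsClosed F) (hdim : ∀ F ∈ 𝓕, HasSmallInductiveDimensionLT F n)
    (hA : A ⊆ ⋃₀ 𝓕) : HasSmallInductiveDimensionLT A n := by
  have := h𝓕.to_subtype
  refine hasSmallInductiveDimensionLT_of_iUnion_isClosed
    (C := fun F : 𝓕 => ((↑) : A → X) ⁻¹' F.1)
    (fun F => (hclosed F F.2).preimage continuous_subtype_val) ?_
    fun F => hasSmallInductiveDimensionLT_of_isInducing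
      ((IsInducing.subtypeVal.comp .subtypeVal).codRestrict fun x => x.2) (hdim F F.2)
  rw [← preimage_iUnion, ← sUnion_eq_iUnion]
  exact eq_univ_of_forall fun x => hA x.2

end SumTheorem

section Separators

variable {X : Type u} [TopologicalSpace X]

theorem t2Space_of_separatesPoints
    (hsep : ∀ x y : X, x ≠ y → ∃ L : Set X, SeparatesPoints L x y) : T2Space X where
  t2 x y hxy := by
    obtain ⟨L, -, W, V, hW, hV, hxW, hyV, hWV, -⟩ := hsep x y hxy
    exact ⟨W, V, hW, hV, hxW, hyV, disjoint_iff_inter_eq_empty.2 hWV⟩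

theorem exists_isOpen_disjoint_frontier_subset_sUnion {x : X} {K : Set X} (hK : IsCompact K)
    {𝓛 : Set (Set X)} (hsep : ∀ y ∈ K, ∃ L ∈ 𝓛, SeparatesPoints L x y) :
    ∃ 𝓕 ⊆ 𝓛, 𝓕.Finite ∧ ∃ W V : Set X, IsOpen W ∧ IsOpen V ∧ x ∈ W ∧ K ⊆ V ∧ Disjoint W V ∧
      frontier W ⊆ ⋃₀ 𝓕 := by
  choose! L hL _ W V hW hV hxW hyV hWV hcompl using hsep
  obtain ⟨t, ht, htfin, hcover⟩ := hK.elim_finite_subcover_image hV fun y hy =>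
    mem_biUnion hy (hyV y hy)
  have hdisj (y) (hy : y ∈ t) : Disjoint (⋂ y ∈ t, W y) (V y) :=
    (disjoint_iff_inter_eq_empty.2 (hWV y (ht hy))).mono_left (biInter_subset_of_mem hy)
  have hopen : IsOpen (⋂ y ∈ t, W y) := htfin.isOpen_biInter fun y hy => hW y (ht hy)
  refine ⟨L '' t, image_subset_iff.2 fun y hy => hL y (ht hy), htfin.image L,
    ⋂ y ∈ t, W y, ⋃ y ∈ t, V y, hopen, isOpen_biUnion fun y hy => hV y (ht hy),
    mem_iInter₂.2 fun y hy => hxW y (ht hy), hcover, disjoint_iUnion₂_right.2 hdisj,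
    fun z hz => ?_⟩
  rw [hopen.frontier_eq] at hz
  by_contra hzL
  refine hz.2 (mem_iInter₂.2 fun y hy => ?_)
  have hzWV : z ∈ W y ∪ V y :=
    (hcompl y (ht hy)).ge fun hzLy => hzL ⟨L y, mem_image_of_mem L hy, hzLy⟩
  exact hzWV.resolve_right (((hdisj y hy).closure_left (hV y (ht hy))).notMem_of_mem_left hz.1)

theorem exists_isOpen_subset_frontier_subset_sUnion {x : X} {G : Set X} (hG : IsOpen G)
    (hxG : x ∈ G) (hGc : IsCompact (frontier G)) {𝓛 : Set (Set X)}
    (hsep : ∀ y ∈ frontier G, ∃ L ∈ 𝓛, SeparatesPoints L x y) :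
    ∃ 𝓕 ⊆ 𝓛, 𝓕.Finite ∧ ∃ U : Set X, IsOpen U ∧ x ∈ U ∧ U ⊆ G ∧ frontier U ⊆ ⋃₀ 𝓕 := by
  obtain ⟨𝓕, h𝓕, hfin, W, V, hW, hV, hxW, hGV, hWV, hfr⟩ :=
    exists_isOpen_disjoint_frontier_subset_sUnion hGc hsep
  have hdisj : Disjoint (frontier G) (closure W) := (hWV.closure_left hV).symm.mono_left hGV
  refine ⟨𝓕, h𝓕, hfin, G ∩ W, hG.inter hW, ⟨hxG, hxW⟩, inter_subset_left, ?_⟩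
  calc
    frontier (G ∩ W) ⊆ frontier G ∩ closure W ∪ closure G ∩ frontier W := frontier_inter_subset G W
    _ = closure G ∩ frontier W := by rw [hdisj.inter_eq, empty_union]
    _ ⊆ ⋃₀ 𝓕 := inter_subset_right.trans hfr

theorem regularSpace_of_isTopologicalBasis_isCompact_frontier [R1Space X]
    (hrim : IsTopologicalBasis {G : Set X | IsOpen G ∧ IsCompact (frontier G)}) :
    RegularSpace X := by
  refine .of_exists_mem_nhds_isClosed_subset fun x s hs => ?_
  obtain ⟨G, ⟨hG, hGc⟩, hxG, hGs⟩ := hrim.mem_nhds_iff.1 hs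
  have hx : x ∉ frontier G := fun hx => hG.inter_frontier_eq.subset ⟨hxG, hx⟩
  obtain ⟨O, P, hO, hP, hxO, hGP, hOP⟩ := SeparatedNhds.of_isCompact_isCompact_isClosed
    isCompact_singleton hGc isClosed_frontier (disjoint_singleton_left.2 hx)
  have hclosure : closure (G ∩ O) ⊆ G := fun z hz => by
    have hzG : z ∈ closure G := closure_mono inter_subset_left hz
    have hzP : z ∉ P := (hOP.closure_left hP).notMem_of_mem_left
      (closure_mono inter_subset_right hz)
    rw [closure_eq_self_union_frontier] at hzG
    exact hzG.resolve_right fun hzfr => hzP (hGP hzfr)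
  exact ⟨closure (G ∩ O), mem_of_superset
    ((hG.inter hO).mem_nhds ⟨hxG, hxO rfl⟩) subset_closure, isClosed_closure,
    hclosure.trans hGs⟩

end Separators

section Metric

variable {X : Type*} [PseudoMetricSpace X]

theorem isTopologicalBasis_isCompact_frontier_of_isCompact_sphere
    (hsph : ∀ x : X, ∃ ε₀ > (0 : ℝ), ∀ ε : ℝ, 0 < ε → ε < ε₀ → IsCompact (Metric.sphere x ε)) :
    IsTopologicalBasis {G : Set X | IsOpen G ∧ IsCompact (frontier G)} := by
  refine isTopologicalBasis_of_isOpen_of_nhds (fun G hG => hG.1) fun x V hxV hV => ?_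
  obtain ⟨ε₀, hε₀, hcompact⟩ := hsph x
  obtain ⟨δ, hδ, hball⟩ := Metric.isOpen_iff.1 hV x hxV
  obtain ⟨ε, hε, hεmin⟩ := exists_between (lt_min hε₀ hδ)
  obtain ⟨hεε₀, hεδ⟩ := lt_min_iff.1 hεmin
  exact ⟨Metric.ball x ε,
    ⟨Metric.isOpen_ball, (hcompact ε hε hεε₀).of_isClosed_subset isClosed_frontier
      Metric.frontier_ball_subset_sphere⟩,
    Metric.mem_ball_self hε, (Metric.ball_subset_ball hεδ.le).trans hball⟩

theorem exists_mem_nhds_secondCountableTopology [WeaklyLocallyCompactSpace X] (x : X) :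
    ∃ s ∈ 𝓝 x, SecondCountableTopology s := by
  obtain ⟨K, hK, hKx⟩ := exists_compact_mem_nhds x
  have : CompactSpace K := isCompact_iff_compactSpace.1 hK
  exact ⟨K, hKx, inferInstance⟩

end Metric

theorem ind_le_of_separators_locallyCompact_general {X : Type u} [TopologicalSpace X] (D : ℕ)
    (hrim : IsTopologicalBasis {G : Set X | IsOpen G ∧ IsCompact (frontier G)})
    (hsc : ∀ x : X, ∃ s ∈ 𝓝 x, SecondCountableTopology s)
    (hsep : ∀ x y : X, x ≠ y → ∃ L : Set X, SeparatesPoints L x y ∧ IndLt D ↥L) :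
    IndLt (D + 1) X := by
  have : T2Space X := t2Space_of_separatesPoints fun x y hxy =>
    (hsep x y hxy).imp fun _ hL => hL.1
  have : RegularSpace X := regularSpace_of_isTopologicalBasis_isCompact_frontier hrim
  intro p V hV hpV
  obtain ⟨s, hs, _⟩ := hsc p
  obtain ⟨K, hK, hKclosed, hKVs⟩ := exists_mem_nhds_isClosed_subset
    (inter_mem (hV.mem_nhds hpV) hs)
  obtain ⟨G, ⟨hG, hGc⟩, hpG, hGK⟩ := hrim.mem_nhds_iff.1 hK
  obtain ⟨𝓕, h𝓕, hfin, U, hU, hpU, hUG, hfr⟩ := exists_isOpen_subset_frontier_subset_sUnion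
    (𝓛 := {L | IsClosed L ∧ IndLt D L}) hG hpG hGc fun y hy => by
      have hpy : p ≠ y := fun h => hG.inter_frontier_eq.subset ⟨hpG, h ▸ hy⟩
      obtain ⟨L, hL, hLdim⟩ := hsep p y hpy
      exact ⟨L, ⟨hL.1, hLdim⟩, hL⟩
  have hUK : closure U ⊆ K := closure_minimal (hUG.trans hGK) hKclosed
  have hfrs : frontier U ⊆ s :=
    frontier_subset_closure.trans (hUK.trans (hKVs.trans inter_subset_right))
  have : SecondCountableTopology (frontier U) :=
    (IsEmbedding.inclusion hfrs).secondCountableTopology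
  refine ⟨U, hU, hpU, hUG.trans (hGK.trans (hKVs.trans inter_subset_left)), ?_⟩
  exact indLt_iff_hasSmallInductiveDimensionLT.2 (hasSmallInductiveDimensionLT_of_subset_sUnion
    hfin.countable (fun L hL => (h𝓕 hL).1)
    (fun L hL => indLt_iff_hasSmallInductiveDimensionLT.1 (h𝓕 hL).2) hfr)

/-- If `X` is a locally compact metric space in which all sufficiently small spheres
`∂B(x,ε)` are compact, and every pair of distinct points of `X` is separated by a
closed set of `ind ≤ D - 1`, then `ind X ≤ D` (finitely many separators suffice to
separate a point from a small compact sphere, and the resulting neighborhood has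
frontier contained in their union). -/
theorem ind_le_of_separators_locallyCompact {X : Type u} [MetricSpace X]
    [LocallyCompactSpace X] (D : ℕ)
    (hsph : ∀ x : X, ∃ ε₀ > (0 : ℝ), ∀ ε : ℝ, 0 < ε → ε < ε₀ →
      IsCompact (Metric.sphere x ε))
    (hsep : ∀ x y : X, x ≠ y →
      ∃ L : Set X, SeparatesPoints L x y ∧ IndLt D ↥L) :
    IndLt (D + 1) X :=
  ind_le_of_separators_locallyCompact_general D
    (isTopologicalBasis_isCompact_frontier_of_isCompact_sphere hsph)
    exists_mem_nhds_secondCountableTopology hsep
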